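/- For real z and τ > 0, the Mordell integral satisfies the modular-type transformation h(z, τ) = (1/√τ) e^{πi/4 + πi z²/τ} h(z/τ, −1/τ), where h(z, −σ) is defined as the complex conjugate of h(z, σ) for σ > 0. -/

import Mathlib

open Complex Real

/-- The Mordell integral for real `z` and `τ > 0`, defined via the rotated contour. -/
noncomputable def mordellH (z τ : ℝ) : ℂ :=
  2 * Complex.exp (Real.pi * Complex.I / 4) *
    ∫ y in Set.Ioi (0 : ℝ),
      Complex.exp (-(Real.pi * τ * y ^ 2)) *
        Complex.cosh (2 * Real.pi * z * Complex.exp (Real.pi * Complex.I / 4) * y) /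
          Complex.cosh (Real.pi * Complex.exp (Real.pi * Complex.I / 4) * y)

/-!
Expanding `1 / cosh` as a geometric series and summing the resulting partial fractions, which are
those of the cosecant, shows that `1 / cosh (π a y)` has Fourier transform
`a⁻¹ / cosh (π w / a)` for every complex `a` with `0 < a.re`. Parseval's formula then moves the
Fourier transform from a Gaussian onto this function, and at `a = e^(πi/4)` the passage from `a`
to `a⁻¹` is complex conjugation.
-/

section CosecantSeries

open Filter Topology

lemma tendsto_sum_range_add_inv_sub_cot {z : ℂ} (hz : z ∈ integerComplement) :
    Tendsto (fun N : ℕ ↦ ∑ n ∈ Finset.range N, (1 / (z + n) + 1 / (z - (n + 1)))) atTop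
      (𝓝 (π * cot (π * z))) := by
  have hcot : Tendsto (fun N : ℕ ↦ ∑ n ∈ Finset.range N, cotTerm z n) atTop
      (𝓝 (π * cot (π * z) - 1 / z)) := by
    rw [cot_series_rep' hz]
    exact (summable_cotTerm hz).hasSum.tendsto_sum_nat
  have hinv : Tendsto (fun N : ℕ ↦ 1 / (z + N)) atTop (𝓝 0) := by
    simpa only [one_div, Function.comp_def] using tendsto_inv₀_cobounded.comp
      ((tendsto_const_add_cobounded z).comp tendsto_natCast_atTop_cobounded)
  have hsum (N : ℕ) : ∑ n ∈ Finset.range N, (1 / (z + n) + 1 / (z - (n + 1))) =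
      ∑ n ∈ Finset.range N, cotTerm z n + (1 / z - 1 / (z + N)) := by
    have telescope := Finset.sum_range_sub' (fun n : ℕ ↦ 1 / (z + n)) N
    rw [Nat.cast_zero, add_zero] at telescope
    rw [← telescope, ← Finset.sum_add_distrib]
    refine Finset.sum_congr rfl fun n _ ↦ ?_
    rw [cotTerm]
    push_cast
    ring
  simpa only [hsum, sub_zero, sub_add_cancel] using hcot.add (hinv.const_sub (1 / z))

lemma cot_sub_cot_add_pi_div_two {x : ℂ} (hsin : sin x ≠ 0) (hcos : cos x ≠ 0) :
    cot x - cot (x + π / 2) = 2 / sin (2 * x) := by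
  rw [Complex.sin_two_mul, Complex.cot_eq_cos_div_sin, Complex.cot_eq_cos_div_sin,
    Complex.sin_add_pi_div_two, Complex.cos_add_pi_div_two]
  field_simp
  linear_combination Complex.cos_sq_add_sin_sq x

lemma tendsto_sum_range_two_mul_csc {z : ℂ} (hz : z ∈ integerComplement) :
    Tendsto (fun N : ℕ ↦ ∑ n ∈ Finset.range (2 * N),
      (-1) ^ n * (1 / (z + n) - 1 / (z - (n + 1)))) atTop (𝓝 (π / sin (π * z))) := by
  have hhalf : z / 2 ∈ integerComplement := fun ⟨n, hn⟩ ↦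
    hz ⟨2 * n, by push_cast; linear_combination 2 * hn⟩
  have hhalf' : (z + 1) / 2 ∈ integerComplement := fun ⟨n, hn⟩ ↦
    hz ⟨2 * n - 1, by push_cast; linear_combination 2 * hn⟩
  have hpair (N : ℕ) : ∑ n ∈ Finset.range (2 * N), (-1) ^ n * (1 / (z + n) - 1 / (z - (n + 1))) =
      1 / 2 * (∑ n ∈ Finset.range N, (1 / (z / 2 + n) + 1 / (z / 2 - (n + 1))) -
        ∑ n ∈ Finset.range N, (1 / ((z + 1) / 2 + n) + 1 / ((z + 1) / 2 - (n + 1)))) := by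
    have halve (u v : ℂ) (huv : v = 2 * u) : 1 / v = 1 / 2 * (1 / u) := by
      rw [huv, one_div_mul_one_div]
    induction N with
    | zero => simp
    | succ N ih =>
      rw [Nat.mul_succ, Finset.sum_range_succ, Finset.sum_range_succ, ih, Finset.sum_range_succ,
        Finset.sum_range_succ, pow_succ, pow_mul, neg_one_sq, one_pow]
      push_cast
      rw [halve (z / 2 + N) (z + 2 * N) (by ring),
        halve (z / 2 - (N + 1)) (z - (2 * N + 1 + 1)) (by ring),
        halve ((z + 1) / 2 + N) (z + (2 * N + 1)) (by ring),
        halve ((z + 1) / 2 - (N + 1)) (z - (2 * N + 1)) (by ring)]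
      ring
  have hcsc : 1 / 2 * (π * cot (π * (z / 2)) - π * cot (π * ((z + 1) / 2))) =
      π / sin (π * z) := by
    have hsin : sin (π * (z / 2)) ≠ 0 := sin_pi_mul_ne_zero hhalf
    have hcos : cos (π * (z / 2)) ≠ 0 := by
      rw [← Complex.sin_add_pi_div_two]
      convert sin_pi_mul_ne_zero hhalf' using 2
      ring
    rw [show π * ((z + 1) / 2) = π * (z / 2) + π / 2 by ring, ← mul_sub,
      cot_sub_cot_add_pi_div_two hsin hcos, show 2 * (π * (z / 2)) = π * z by ring]
    ring
  rw [← hcsc]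
  simpa only [hpair] using ((tendsto_sum_range_add_inv_sub_cot hhalf).sub
    (tendsto_sum_range_add_inv_sub_cot hhalf')).const_mul (1 / 2)

end CosecantSeries

section HyperbolicSecant

open MeasureTheory Filter Asymptotics Set
open scoped Topology

lemma cosh_ne_zero_of_re_ne_zero {z : ℂ} (hz : z.re ≠ 0) : cosh z ≠ 0 := by
  intro h
  have hexp : cexp z = -cexp (-z) := by
    rw [Complex.cosh, div_eq_zero_iff, or_iff_left two_ne_zero] at h
    exact eq_neg_of_add_eq_zero_left h
  have hnorm := congrArg norm hexp
  rw [norm_neg, norm_exp, norm_exp, Real.exp_eq_exp, neg_re] at hnorm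
  exact hz (self_eq_neg.mp hnorm)

lemma cosh_mul_ofReal_ne_zero {a : ℂ} (ha : a.re ≠ 0) (y : ℝ) : cosh (a * y) ≠ 0 := by
  rcases eq_or_ne y 0 with rfl | hy
  · simp
  · exact cosh_ne_zero_of_re_ne_zero (by simpa using ⟨ha, hy⟩)

lemma integrable_cosh_div_cosh {a s : ℂ} (h : |s.re| < a.re) :
    Integrable fun y : ℝ ↦ cosh (s * y) / cosh (a * y) := by
  obtain ⟨hneg, hpos⟩ := abs_lt.mp h
  have ha : 0 < a.re := (abs_nonneg _).trans_lt h
  have hcont : Continuous fun y : ℝ ↦ cosh (s * y) / cosh (a * y) :=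
    (by fun_prop : Continuous fun y : ℝ ↦ cosh (s * y)).div (by fun_prop)
      (cosh_mul_ofReal_ne_zero ha.ne')
  have hfactor : (fun y : ℝ ↦ cosh (s * y) / cosh (a * y)) = fun y : ℝ ↦
      (cexp ((s - a) * y) + cexp ((-s - a) * y)) * (1 + cexp (-(2 * a) * y))⁻¹ := by
    funext y
    have hexp (c : ℂ) : cexp (c * y) = cexp ((c - a) * y) * cexp (a * y) := by
      rw [← Complex.exp_add]; ring_nf
    rw [Complex.cosh, Complex.cosh, ← neg_mul, ← neg_mul, hexp s, hexp (-s), hexp (-a),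
      ← div_eq_mul_inv, div_div_div_cancel_right₀ two_ne_zero, ← add_mul,
      show -a - a = -(2 * a) by ring, ← one_add_mul, mul_div_mul_right _ _ (Complex.exp_ne_zero _)]
  have hden : Tendsto (fun y : ℝ ↦ (1 + cexp (-(2 * a) * y))⁻¹) atTop (𝓝 1) := by
    have hexp : Tendsto (fun y : ℝ ↦ cexp (-(2 * a) * y)) atTop (𝓝 0) := by
      rw [tendsto_exp_nhds_zero_iff]
      simpa using tendsto_id.const_mul_atTop_of_neg (r := -(2 * a.re)) (by linarith)
    simpa using (hexp.const_add 1).inv₀ (by simp)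
  refine hcont.locallyIntegrable.integrable_of_isBigO_atTop_of_norm_isNegInvariant
    (g := fun y : ℝ ↦ cexp ((s - a) * y) + cexp ((-s - a) * y)) (.of_forall fun y ↦ ?_) ?_
    ⟨Ioi 0, Ioi_mem_atTop 0, (integrableOn_exp_mul_complex_Ioi ?_ 0).add
      (integrableOn_exp_mul_complex_Ioi ?_ 0)⟩
  · simp
  · rw [hfactor]
    simpa using (isBigO_refl _ _).mul (hden.isBigO_one ℂ)
  · simpa using hpos
  · simpa using by linarith

lemma cexp_neg_mul_mul_cosh (b s y : ℂ) :
    cexp (-b * y) * cosh (s * y) = (cexp (-(b + s) * y) + cexp (-(b - s) * y)) / 2 := by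
  rw [Complex.cosh, mul_div_assoc', mul_add, ← Complex.exp_add, ← Complex.exp_add]
  ring_nf

lemma integrableOn_cexp_neg_mul_mul_cosh {b s : ℂ} (h : |s.re| < b.re) :
    IntegrableOn (fun y : ℝ ↦ cexp (-b * y) * cosh (s * y)) (Ioi 0) := by
  obtain ⟨hneg, hpos⟩ := abs_lt.mp h
  simp only [cexp_neg_mul_mul_cosh]
  exact ((integrableOn_exp_mul_complex_Ioi (by simpa using by linarith) 0).add
    (integrableOn_exp_mul_complex_Ioi (by simpa using hpos) 0)).div_const 2

lemma integral_Ioi_cexp_neg_mul_mul_cosh {b s : ℂ} (h : |s.re| < b.re) :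
    ∫ y : ℝ in Ioi 0, cexp (-b * y) * cosh (s * y) = (1 / (b + s) + 1 / (b - s)) / 2 := by
  obtain ⟨hneg, hpos⟩ := abs_lt.mp h
  have hadd : (-(b + s)).re < 0 := by simpa using by linarith
  have hsub : (-(b - s)).re < 0 := by simpa using hpos
  simp only [cexp_neg_mul_mul_cosh]
  rw [integral_div, integral_add (integrableOn_exp_mul_complex_Ioi hadd 0)
    (integrableOn_exp_mul_complex_Ioi hsub 0), integral_exp_mul_complex_Ioi hadd,
    integral_exp_mul_complex_Ioi hsub]
  simp only [ofReal_zero, mul_zero, Complex.exp_zero, neg_div_neg_eq]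

lemma sum_range_neg_one_pow_mul_cexp {x : ℂ} (hx : cosh x ≠ 0) (N : ℕ) :
    ∑ n ∈ Finset.range N, (-1) ^ n * cexp (-((2 * n + 1) * x)) =
      (1 - (-cexp (-(2 * x))) ^ N) / (2 * cosh x) := by
  have hcosh : 2 * cosh x = cexp x * (1 - -cexp (-(2 * x))) := by
    rw [Complex.cosh, mul_sub, mul_neg, ← Complex.exp_add]; ring_nf
  have hterm (n : ℕ) :
      cexp x * ((-1) ^ n * cexp (-((2 * n + 1) * x))) = (-cexp (-(2 * x))) ^ n := by
    rw [neg_pow (cexp _), ← Complex.exp_nat_mul, mul_left_comm, ← Complex.exp_add]; ring_nf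
  rw [eq_div_iff (mul_ne_zero two_ne_zero hx), hcosh, ← mul_neg_geom_sum, mul_comm,
    mul_right_comm, mul_comm, Finset.mul_sum, Finset.sum_congr rfl fun n _ ↦ hterm n]

lemma tendsto_integral_one_sub_pow_mul {α 𝕜 : Type*} [RCLike 𝕜] [MeasurableSpace α]
    {μ : Measure α} {q g : α → 𝕜} (hq : AEStronglyMeasurable q μ) (hq_lt : ∀ᵐ x ∂μ, ‖q x‖ < 1)
    (hg : Integrable g μ) :
    Tendsto (fun N : ℕ ↦ ∫ x, (1 - q x ^ N) * g x ∂μ) atTop (𝓝 (∫ x, g x ∂μ)) := by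
  refine tendsto_integral_of_dominated_convergence (fun x ↦ 2 * ‖g x‖)
    (fun N ↦ (aestronglyMeasurable_const.sub (hq.pow N)).mul hg.aestronglyMeasurable)
    (hg.norm.const_mul 2) (fun N ↦ ?_) ?_
  · filter_upwards [hq_lt] with x hx
    rw [norm_mul]
    gcongr
    calc ‖1 - q x ^ N‖ ≤ ‖(1 : 𝕜)‖ + ‖q x ^ N‖ := norm_sub_le _ _
      _ ≤ 1 + 1 := by
        rw [norm_one, norm_pow]
        gcongr
        exact pow_le_one₀ (norm_nonneg _) hx.le
      _ = 2 := one_add_one_eq_two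
  · filter_upwards [hq_lt] with x hx
    simpa using ((tendsto_pow_atTop_nhds_zero_of_norm_lt_one hx).const_sub 1).mul_const (g x)

lemma integral_Ioi_one_sub_pow_mul_cosh_div_cosh {a s : ℂ} (h : |s.re| < a.re) (N : ℕ) :
    ∫ y : ℝ in Ioi 0, (1 - (-cexp (-(2 * a) * y)) ^ N) * (cosh (s * y) / cosh (a * y)) =
      ∑ n ∈ Finset.range N, (-1) ^ n * (1 / ((2 * n + 1) * a + s) + 1 / ((2 * n + 1) * a - s)) := by
  have ha : 0 < a.re := (abs_nonneg _).trans_lt h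
  have hre (n : ℕ) : |s.re| < ((2 * n + 1) * a : ℂ).re := by
    have : ((2 * n + 1) * a : ℂ).re = (2 * n + 1) * a.re := by simp
    rw [this]
    nlinarith [Nat.cast_nonneg (α := ℝ) n]
  have hsum (y : ℝ) : (1 - (-cexp (-(2 * a) * y)) ^ N) * (cosh (s * y) / cosh (a * y)) =
      ∑ n ∈ Finset.range N, 2 * (-1) ^ n * (cexp (-((2 * n + 1) * a) * y) * cosh (s * y)) := by
    have hgeom := sum_range_neg_one_pow_mul_cexp (cosh_mul_ofReal_ne_zero ha.ne' y) N
    have hcosh := cosh_mul_ofReal_ne_zero ha.ne' y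
    rw [eq_div_iff (mul_ne_zero two_ne_zero hcosh)] at hgeom
    rw [neg_mul, mul_assoc, ← hgeom, mul_div_assoc', mul_assoc, div_eq_iff hcosh,
      Finset.sum_mul, Finset.sum_mul]
    refine Finset.sum_congr rfl fun n _ ↦ ?_
    ring_nf
  simp only [hsum]
  rw [integral_finsetSum _ fun n _ ↦ (integrableOn_cexp_neg_mul_mul_cosh (hre n)).const_mul _]
  refine Finset.sum_congr rfl fun n _ ↦ ?_
  rw [integral_const_mul, integral_Ioi_cexp_neg_mul_mul_cosh (hre n)]
  ring

lemma div_add_half_mem_integerComplement {a s : ℂ} (h : |s.re| < a.re) :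
    s / (2 * a) + 1 / 2 ∈ integerComplement := by
  rintro ⟨n, hn⟩
  have ha : 0 < a.re := (abs_nonneg _).trans_lt h
  have hs : s = ↑(2 * n - 1 : ℝ) * a := by
    have ha₀ : a ≠ 0 := ne_zero_of_re_pos ha
    field_simp at hn
    push_cast
    linear_combination -hn
  have hodd : (1 : ℝ) ≤ |2 * (n : ℝ) - 1| := by
    exact_mod_cast Int.one_le_abs (by lia : 2 * n - 1 ≠ 0)
  rw [hs, re_ofReal_mul, abs_mul, abs_of_pos ha] at h
  exact h.not_ge (le_mul_of_one_le_left ha.le hodd)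

theorem integral_Ioi_cosh_div_cosh {a s : ℂ} (h : |s.re| < a.re) :
    ∫ y : ℝ in Ioi 0, cosh (s * y) / cosh (a * y) = π / (2 * a * cos (π * s / (2 * a))) := by
  have ha : 0 < a.re := (abs_nonneg _).trans_lt h
  have ha₀ : a ≠ 0 := ne_zero_of_re_pos ha
  set z : ℂ := s / (2 * a) + 1 / 2 with hz
  have hs : s = 2 * a * z - a := by rw [hz]; field_simp; ring
  have hterm (n : ℕ) : 1 / ((2 * n + 1) * a + s) + 1 / ((2 * n + 1) * a - s) =
      1 / (2 * a) * (1 / (z + n) - 1 / (z - (n + 1))) := by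
    rw [show (2 * n + 1) * a + s = 2 * a * (z + n) by rw [hs]; ring,
      show (2 * n + 1) * a - s = 2 * a * -(z - (n + 1)) by rw [hs]; ring,
      ← one_div_mul_one_div, ← one_div_mul_one_div (2 * a) (-_), div_neg]
    ring
  have hseries : Tendsto (fun N : ℕ ↦ ∫ y : ℝ in Ioi 0,
      (1 - (-cexp (-(2 * a) * y)) ^ (2 * N)) * (cosh (s * y) / cosh (a * y))) atTop
      (𝓝 (1 / (2 * a) * (π / sin (π * z)))) := by
    simp only [integral_Ioi_one_sub_pow_mul_cosh_div_cosh h, hterm, mul_left_comm _ (1 / (2 * a)),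
      ← Finset.mul_sum]
    exact (tendsto_sum_range_two_mul_csc (div_add_half_mem_integerComplement h)).const_mul _
  have hlt : ∀ᵐ y : ℝ ∂volume.restrict (Ioi 0), ‖-cexp (-(2 * a) * y)‖ < 1 := by
    filter_upwards [ae_restrict_mem measurableSet_Ioi] with y hy
    rw [norm_neg, norm_exp, Real.exp_lt_one_iff]
    simpa [mul_assoc] using mul_pos ha hy
  have hintegral := (tendsto_integral_one_sub_pow_mul (Continuous.aestronglyMeasurable
    (by fun_prop)) hlt (integrable_cosh_div_cosh h).integrableOn).comp
      (tendsto_id.const_mul_atTop' two_pos)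
  rw [tendsto_nhds_unique hintegral hseries,
    show π * z = π * s / (2 * a) + π / 2 by rw [hz]; ring, Complex.sin_add_pi_div_two,
    div_mul_div_comm, one_mul]

end HyperbolicSecant

section FourierTransform

open MeasureTheory Set
open scoped FourierTransform

lemma integral_cexp_mul_of_even {c : ℂ} {g : ℝ → ℂ} (hg : g.Even)
    (hint : Integrable fun y : ℝ ↦ cexp (c * y) * g y) :
    ∫ y : ℝ, cexp (c * y) * g y = 2 * ∫ y : ℝ in Ioi 0, cosh (c * y) * g y := by
  have hneg (y : ℝ) : cexp (c * ↑(-y)) * g (-y) = cexp (-(c * y)) * g y := by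
    rw [hg y, ofReal_neg, mul_neg]
  have hint_neg : Integrable fun y : ℝ ↦ cexp (-(c * y)) * g y := by
    simpa only [hneg] using hint.comp_neg
  have hreflect : ∫ y : ℝ in Iic 0, cexp (c * y) * g y =
      ∫ y : ℝ in Ioi 0, cexp (-(c * y)) * g y := by
    simpa only [hneg, neg_zero] using
      (integral_comp_neg_Ioi 0 fun y : ℝ ↦ cexp (c * y) * g y).symm
  rw [← intervalIntegral.integral_Iic_add_Ioi hint.integrableOn hint.integrableOn, hreflect,
    add_comm, ← integral_add hint.integrableOn hint_neg.integrableOn, ← integral_const_mul]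
  congr 1 with y
  rw [Complex.cosh]
  ring

lemma integrable_inv_cosh {a : ℂ} (ha : 0 < a.re) : Integrable fun y : ℝ ↦ (cosh (a * y))⁻¹ := by
  simpa using integrable_cosh_div_cosh (s := 0) (by simpa using ha)

theorem fourier_inv_cosh {a : ℂ} (ha : 0 < a.re) :
    𝓕 (fun y : ℝ ↦ (cosh (π * a * y))⁻¹) = fun w : ℝ ↦ a⁻¹ * (cosh (π * a⁻¹ * w))⁻¹ := by
  have hπa : 0 < (π * a).re := by simpa using mul_pos pi_pos ha
  ext w
  have hphase (y : ℝ) : cexp (↑(-2 * π * y * w) * I) = cexp (-2 * π * w * I * y) := by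
    push_cast
    ring_nf
  have hint : Integrable fun y : ℝ ↦ cexp (-2 * π * w * I * y) * (cosh (π * a * y))⁻¹ := by
    simp only [← hphase]
    exact (integrable_inv_cosh hπa).bdd_mul (c := 1) (Continuous.aestronglyMeasurable (by fun_prop))
      (.of_forall fun y ↦ (norm_exp_ofReal_mul_I _).le)
  have ha₀ : a ≠ 0 := ne_zero_of_re_pos ha
  have hcos : cos (π * (-2 * π * w * I) / (2 * (π * a))) = cosh (π * a⁻¹ * w) := by
    rw [← Complex.cosh_mul_I]
    congr 1
    field_simp
    rw [I_sq]
    ring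
  simp only [Real.fourier_real_eq_integral_exp_smul, smul_eq_mul, hphase]
  rw [integral_cexp_mul_of_even (fun y ↦ by simp) hint]
  simp only [← div_eq_mul_inv]
  rw [integral_Ioi_cosh_div_cosh (by simpa using hπa), hcos]
  field_simp

lemma integral_fourier_mul_eq_integral_mul_fourier {V : Type*} [NormedAddCommGroup V]
    [InnerProductSpace ℝ V] [FiniteDimensional ℝ V] [MeasurableSpace V] [BorelSpace V]
    {f g : V → ℂ} (hf : Integrable f) (hg : Integrable g) :
    ∫ w, 𝓕 f w * g w = ∫ x, f x * 𝓕 g x := by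
  simpa using! VectorFourier.integral_fourierIntegral_smul_eq_flip (L := innerₗ V)
    Real.continuous_fourierChar continuous_inner hf hg

lemma inv_re_pos {τ : ℂ} (hτ : 0 < τ.re) : 0 < τ⁻¹.re := by
  rw [inv_re]
  exact div_pos hτ (normSq_pos.mpr (ne_zero_of_re_pos hτ))

lemma fourier_gaussian_inv {τ : ℂ} (hτ : 0 < τ.re) (z : ℂ) :
    𝓕 (fun x : ℝ ↦ cexp (-π * τ⁻¹ * x ^ 2 + 2 * π * (I * z / τ) * x)) = fun y : ℝ ↦
      τ ^ (1 / 2 : ℂ) * cexp (-(π * z ^ 2 / τ)) * cexp (-π * τ * y ^ 2 + 2 * π * z * y) := by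
  have hτ₀ : τ ≠ 0 := ne_zero_of_re_pos hτ
  have harg : τ.arg ≠ π := fun h ↦ hτ.not_gt (arg_eq_pi_iff.mp h).1
  have complete_square (y : ℝ) : -π / τ⁻¹ * (y + I * (I * z / τ)) ^ 2 =
      -(π * z ^ 2 / τ) + (-π * τ * y ^ 2 + 2 * π * z * y) := by
    rw [mul_div_assoc, ← mul_assoc, I_mul_I]
    field_simp
    ring
  rw [fourier_gaussian_pi' (inv_re_pos hτ), inv_cpow _ _ harg, one_div, inv_inv]
  ext y
  rw [complete_square, Complex.exp_add, ← mul_assoc]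

theorem integral_gaussian_div_cosh {a τ : ℂ} (ha : 0 < a.re) (hτ : 0 < τ.re) (z : ℂ) :
    ∫ y : ℝ, cexp (-π * τ * y ^ 2 + 2 * π * z * y) / cosh (π * a * y) =
      1 / (a * τ ^ (1 / 2 : ℂ)) * cexp (π * z ^ 2 / τ) *
        ∫ x : ℝ, cexp (-π * τ⁻¹ * x ^ 2 + 2 * π * (I * z / τ) * x) / cosh (π * a⁻¹ * x) := by
  have hgaussian : Integrable fun x : ℝ ↦
      cexp (-π * τ⁻¹ * x ^ 2 + 2 * π * (I * z / τ) * x) := by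
    simpa using integrable_cexp_quadratic (b := π * τ⁻¹)
      (by simpa using mul_pos pi_pos (inv_re_pos hτ)) (2 * π * (I * z / τ)) 0
  have hsech : Integrable fun y : ℝ ↦ (cosh (π * a * y))⁻¹ :=
    integrable_inv_cosh (by simpa using mul_pos pi_pos ha)
  have hfourier (y : ℝ) : cexp (-π * τ * y ^ 2 + 2 * π * z * y) / cosh (π * a * y) =
      (τ ^ (1 / 2 : ℂ))⁻¹ * cexp (π * z ^ 2 / τ) *
        (𝓕 (fun x : ℝ ↦ cexp (-π * τ⁻¹ * x ^ 2 + 2 * π * (I * z / τ) * x)) y *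
          (cosh (π * a * y))⁻¹) := by
    have hτ₀ : τ ^ (1 / 2 : ℂ) ≠ 0 :=
      (cpow_ne_zero_iff_of_exponent_ne_zero (by norm_num)).mpr (ne_zero_of_re_pos hτ)
    rw [fourier_gaussian_inv hτ, Complex.exp_neg]
    field_simp
  simp only [hfourier]
  rw [integral_const_mul, integral_fourier_mul_eq_integral_mul_fourier hgaussian hsech,
    fourier_inv_cosh ha]
  simp only [mul_left_comm _ a⁻¹, integral_const_mul]
  simp only [← div_eq_mul_inv]
  ring

end FourierTransform

section Mordell

open MeasureTheory Set ComplexConjugate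

lemma norm_cexp_quadratic_le {b : ℂ} (hb : b.re < 0) (c : ℂ) (y : ℝ) :
    ‖cexp (b * y ^ 2 + c * y)‖ ≤ rexp (-c.re ^ 2 / (4 * b.re)) := by
  rw [norm_exp, Real.exp_le_exp, le_div_iff_of_neg (by linarith), ← ofReal_pow, add_re,
    re_mul_ofReal, re_mul_ofReal]
  linarith [sq_nonneg (2 * b.re * y + c.re)]

lemma mordellH_neg (z τ : ℝ) : mordellH (-z) τ = mordellH z τ := by
  simp only [mordellH, ofReal_neg, mul_neg, neg_mul, Complex.cosh_neg]

lemma cexp_pi_mul_I_div_four_sq : cexp (π * I / 4) ^ 2 = I := by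
  rw [← Complex.exp_nat_mul]
  convert exp_pi_div_two_mul_I using 2
  push_cast
  ring

lemma I_mul_cexp_pi_mul_I_div_four : I * cexp (π * I / 4) = -(cexp (π * I / 4))⁻¹ := by
  rw [← inv_neg]
  refine eq_inv_of_mul_eq_one_left ?_
  linear_combination -I * cexp_pi_mul_I_div_four_sq - I_mul_I

lemma re_cexp_pi_mul_I_div_four_pos : 0 < (cexp (π * I / 4)).re := by
  simp [exp_re]

lemma mordellH_eq_integral (z : ℝ) {τ : ℝ} (hτ : 0 < τ) :
    mordellH z τ = cexp (π * I / 4) * ∫ y : ℝ,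
      cexp (-π * τ * y ^ 2 + 2 * π * (z * cexp (π * I / 4)) * y) /
        cosh (π * cexp (π * I / 4) * y) := by
  set θ := cexp (π * I / 4) with hθ
  have hsplit (y : ℝ) : cexp (-π * τ * y ^ 2 + 2 * π * (z * θ) * y) / cosh (π * θ * y) =
      cexp (2 * π * (z * θ) * y) * (cexp (-π * τ * y ^ 2) / cosh (π * θ * y)) := by
    rw [add_comm, Complex.exp_add, mul_div_assoc]
  have hint : Integrable fun y : ℝ ↦
      cexp (2 * π * (z * θ) * y) * (cexp (-π * τ * y ^ 2) / cosh (π * θ * y)) := by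
    simp only [← hsplit]
    simp only [div_eq_mul_inv]
    have hπθ : 0 < (π * θ).re := by simpa using mul_pos pi_pos re_cexp_pi_mul_I_div_four_pos
    have hπτ : (-π * τ : ℂ).re < 0 := by simpa using mul_pos pi_pos hτ
    exact (integrable_inv_cosh hπθ).bdd_mul (Continuous.aestronglyMeasurable (by fun_prop))
      (.of_forall (norm_cexp_quadratic_le hπτ (2 * π * (z * θ))))
  simp only [hsplit]
  rw [integral_cexp_mul_of_even (fun y ↦ by simp) hint, mordellH, ← hθ, mul_left_comm, mul_assoc]
  congr 3 with y
  ring_nf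

lemma conj_mordellH_eq_integral (z : ℝ) {τ : ℝ} (hτ : 0 < τ) :
    conj (mordellH z τ) = (cexp (π * I / 4))⁻¹ * ∫ y : ℝ,
      cexp (-π * τ * y ^ 2 + 2 * π * (z * (cexp (π * I / 4))⁻¹) * y) /
        cosh (π * (cexp (π * I / 4))⁻¹ * y) := by
  have hconj : conj (cexp (π * I / 4)) = (cexp (π * I / 4))⁻¹ := by
    rw [← Complex.exp_conj, ← Complex.exp_neg]
    simp [neg_div, Complex.conj_ofNat]
  rw [mordellH_eq_integral z hτ, map_mul, ← integral_conj, hconj]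
  simp only [map_div₀, ← Complex.exp_conj, ← Complex.cosh_conj, map_add, map_mul, map_neg, map_pow,
    conj_ofReal, hconj, map_ofNat]

end Mordell

/-- h(z, −σ) for σ > 0 is defined as the complex conjugate of h(z, σ). -/
theorem mordell_modular (z τ : ℝ) (hτ : 0 < τ) :
    mordellH z τ =
      1 / Real.sqrt τ *
        Complex.exp (Real.pi * Complex.I / 4 + Real.pi * Complex.I * z ^ 2 / τ) *
          (starRingEnd ℂ) (mordellH (z / τ) (1 / τ)) := by
  set θ := cexp (π * I / 4) with hθ
  have hsqrt : (τ : ℂ) ^ (1 / 2 : ℂ) = √τ := by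
    rw [Real.sqrt_eq_rpow, ofReal_cpow hτ.le]
    norm_num
  have hlinear : I * (↑(-z) * θ) / τ = ↑(z / τ) * θ⁻¹ := by
    push_cast
    linear_combination -z / τ * I_mul_cexp_pi_mul_I_div_four
  have hquadratic : π * (↑(-z) * θ) ^ 2 / τ = π * I * z ^ 2 / τ := by
    push_cast
    linear_combination π * z ^ 2 / τ * cexp_pi_mul_I_div_four_sq
  rw [← mordellH_neg, mordellH_eq_integral _ hτ, conj_mordellH_eq_integral _ (one_div_pos.mpr hτ),
    integral_gaussian_div_cosh re_cexp_pi_mul_I_div_four_pos (by simpa using hτ), ← hθ, hsqrt,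
    hlinear, hquadratic, Complex.exp_add, one_div τ, ofReal_inv]
  ring
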